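/- arXiv:1309.4656 — 5 statements merged into one kernel-verified Lean document; each statement's English description precedes it below -/
import Mathlib

section
/- (Lemma 1, point-alternative case.) Let x₁,…,xₙ be i.i.d. from the one-parameter exponential family f(x|θ) = h(x) exp[η(θ)T(x) − A(θ)] with η strictly increasing, fix θ₀ and γ > 0, and suppose θ* > θ₀ minimizes g_γ(θ,θ₀) over all θ > θ₀. Then for every data-generating parameter θ_t and every point alternative θ₁ > θ₀, P_{θ_t}[BF_{*0}(x) > γ] ≥ P_{θ_t}[BF₁₀(x) > γ], where BF_{*0} and BF₁₀ denote the Bayes factors of the point alternatives θ* and θ₁ against θ₀, and P_{θ_t} denotes probability under i.i.d. sampling from f(·|θ_t). -/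
open MeasureTheory

/-!
In an exponential family the Bayes factor is an exponential function of the sufficient statistic
`∑ i, T (x i)`, increasing as soon as `η θ₀ < η θ₁`. The evidence event `γ < BF₁₀` is therefore the
event that this statistic exceeds `g_γ(θ₁, θ₀)`. A smaller threshold gives a larger event, and so a
larger probability whatever the sampling law.
-/

section ExpFamily

variable {ι X Θ : Type*} [Fintype ι]

/-- The density `f(x|θ)` of the exponential family with base factor `h`, sufficient statistic `T`,
natural parameter `η` and log-normalizer `A`. The normalization is not part of the definition. -/
noncomputable def expFamilyDensity (h T : X → ℝ) (η A : Θ → ℝ) (x : X) (θ : Θ) : ℝ :=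
  h x * Real.exp (η θ * T x - A θ)

/-- The Bayes factor `BF₁₀` of the point hypothesis `θ₁` against `θ₀`, for a sample `x` of
independent observations with density `f`. -/
noncomputable def bayesFactor (f : X → Θ → ℝ) (θ₀ θ₁ : Θ) (x : ι → X) : ℝ :=
  ∏ i, f (x i) θ₁ / f (x i) θ₀

/-- The function `g_γ(θ, θ₀)` for `n` observations: the value that the sufficient statistic has to
exceed for the Bayes factor of `θ` against `θ₀` to exceed `γ`. It has the junk value `0` when
`η θ = η θ₀`. -/
noncomputable def evidenceThreshold (η A : Θ → ℝ) (n : ℕ) (γ : ℝ) (θ₀ θ : Θ) : ℝ :=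
  (Real.log γ + n * (A θ - A θ₀)) / (η θ - η θ₀)

variable {h T : X → ℝ} {η A : Θ → ℝ}

theorem expFamilyDensity_div_expFamilyDensity {x : X} (hx : h x ≠ 0) (θ₀ θ₁ : Θ) :
    expFamilyDensity h T η A x θ₁ / expFamilyDensity h T η A x θ₀ =
      Real.exp ((η θ₁ - η θ₀) * T x - (A θ₁ - A θ₀)) := by
  rw [expFamilyDensity, expFamilyDensity, mul_div_mul_left _ _ hx, ← Real.exp_sub]
  congr 1
  ring

theorem bayesFactor_expFamilyDensity {x : ι → X} (hx : ∀ i, h (x i) ≠ 0) (θ₀ θ₁ : Θ) :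
    bayesFactor (expFamilyDensity h T η A) θ₀ θ₁ x =
      Real.exp ((η θ₁ - η θ₀) * ∑ i, T (x i) - Fintype.card ι * (A θ₁ - A θ₀)) := by
  simp only [bayesFactor, expFamilyDensity_div_expFamilyDensity (hx _)]
  rw [← Real.exp_sum, Finset.sum_sub_distrib, ← Finset.mul_sum, Finset.sum_const,
    Finset.card_univ, nsmul_eq_mul]

theorem lt_bayesFactor_expFamilyDensity_iff {x : ι → X} (hx : ∀ i, h (x i) ≠ 0) {γ : ℝ}
    (hγ : 0 < γ) {θ₀ θ₁ : Θ} (hη : η θ₀ < η θ₁) :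
    γ < bayesFactor (expFamilyDensity h T η A) θ₀ θ₁ x ↔
      evidenceThreshold η A (Fintype.card ι) γ θ₀ θ₁ < ∑ i, T (x i) := by
  rw [bayesFactor_expFamilyDensity hx, ← Real.log_lt_iff_lt_exp hγ, lt_sub_iff_add_lt,
    evidenceThreshold, div_lt_iff₀' (sub_pos.mpr hη)]

theorem stmt_1_general [MeasurableSpace X] (hh : ∀ x, h x ≠ 0) {γ : ℝ} (hγ : 0 < γ)
    {θ₀ θ₁ θStar : Θ} (hη₁ : η θ₀ < η θ₁) (hηStar : η θ₀ < η θStar)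
    (hle : evidenceThreshold η A (Fintype.card ι) γ θ₀ θStar ≤
      evidenceThreshold η A (Fintype.card ι) γ θ₀ θ₁)
    (ν : Measure (ι → X)) :
    ν {x | γ < bayesFactor (expFamilyDensity h T η A) θ₀ θ₁ x} ≤
      ν {x | γ < bayesFactor (expFamilyDensity h T η A) θ₀ θStar x} := by
  refine measure_mono fun x (hx : γ < _) ↦ ?_
  have hhx (i : ι) : h (x i) ≠ 0 := hh (x i)
  rw [lt_bayesFactor_expFamilyDensity_iff hhx hγ hη₁] at hx
  exact (lt_bayesFactor_expFamilyDensity_iff hhx hγ hηStar).mpr (hle.trans_lt hx)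

end ExpFamily

/-- Lemma 1, point-alternative case: in the one-parameter exponential
family `f(x|θ) = h(x) exp[η(θ)T(x) − A(θ)]` with `η` strictly increasing, if
`θ* > θ₀` minimizes `g_γ(θ,θ₀) = (log γ + n[A(θ) − A(θ₀)])/(η(θ) − η(θ₀))` over
`θ > θ₀`, then for every data-generating parameter `θ_t` and every point alternative
`θ₁ > θ₀`, `P_{θ_t}[BF_{*0} > γ] ≥ P_{θ_t}[BF₁₀ > γ]`, where `P_{θ_t}` is the
i.i.d. (product) law of `n` observations drawn from `f(·|θ_t)`. -/
theorem stmt_1 {X : Type*} [MeasurableSpace X] (μ : Measure X) (n : ℕ)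
    (h T : X → ℝ) (η A : ℝ → ℝ)
    (hη : StrictMono η) (hpos : ∀ x, 0 < h x)
    (hT : Measurable T) (hh : Measurable h)
    (f : X → ℝ → ℝ)
    (hf : ∀ x θ, f x θ = h x * Real.exp (η θ * T x - A θ))
    (hprob : ∀ θ : ℝ,
      IsProbabilityMeasure (μ.withDensity fun x => ENNReal.ofReal (f x θ)))
    (θ₀ θStar : ℝ) (γ : ℝ) (hγ : 0 < γ)
    (hθStar : θ₀ < θStar)
    (hmin : ∀ θ, θ₀ < θ →
      (Real.log γ + n * (A θStar - A θ₀)) / (η θStar - η θ₀) ≤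
        (Real.log γ + n * (A θ - A θ₀)) / (η θ - η θ₀))
    (θ₁ : ℝ) (hθ₁ : θ₀ < θ₁) (θt : ℝ) :
    (Measure.pi fun _ : Fin n => μ.withDensity fun x => ENNReal.ofReal (f x θt))
        {x | γ < ∏ i, f (x i) θ₁ / f (x i) θ₀} ≤
      (Measure.pi fun _ : Fin n => μ.withDensity fun x => ENNReal.ofReal (f x θt))
        {x | γ < ∏ i, f (x i) θStar / f (x i) θ₀} := by
  obtain rfl : f = expFamilyDensity h T η A := funext₂ hf
  exact stmt_1_general (fun x ↦ (hpos x).ne') hγ (hη hθ₁) (hη hθStar)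
    (by simpa only [evidenceThreshold, Fintype.card_fin] using hmin θ₁ hθ₁) _
end

section
/- (Lemma 2, statement 1.) Let g_γ(θ,θ₀) = (log γ + n[A(θ) − A(θ₀)])/(θ − θ₀) for θ ≠ θ₀, where γ > 1, n ≥ 1, and A is twice continuously differentiable on an interval containing [θ₀, θ*]. Suppose θ* > θ₀ is a stationary point of g_γ(·,θ₀), i.e., (d/dθ) g_γ(θ,θ₀) = 0 at θ = θ*. Then there exists t ∈ (θ₀, θ*) such that log γ = (n/2) A''(t) (θ* − θ₀)²; in particular, if A''(t) > 0, then |θ* − θ₀| = √(2 log γ / (n A''(t))). -/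
/-!
Stationarity of `g_γ(·, θ₀)` at `θ*` says `log γ = n [A(θ₀) - A(θ*) - A'(θ*) (θ₀ - θ*)]`. The
bracket is the first-order Taylor remainder of `A` centred at `θ*` (not `θ₀`) and evaluated at `θ₀`,
so its Lagrange form is `A''(t) (θ₀ - θ*)² / 2`.
-/

open Set

theorem deriv_div_sub_eq_zero_iff {𝕜 : Type*} [NontriviallyNormedField 𝕜] {f : 𝕜 → 𝕜} {a x : 𝕜}
    (hf : DifferentiableAt 𝕜 f x) (hx : x ≠ a) :
    deriv (fun y => f y / (y - a)) x = 0 ↔ f x = deriv f x * (x - a) := by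
  have hxa : x - a ≠ 0 := sub_ne_zero.mpr hx
  rw [deriv_fun_div hf (differentiableAt_fun_id.sub_const a) hxa, div_eq_zero_iff,
    or_iff_left (pow_ne_zero 2 hxa), deriv_sub_const_fun, deriv_id'', mul_one, sub_eq_zero, eq_comm]

theorem taylor_mean_remainder_lagrange_deriv_deriv {f : ℝ → ℝ} {x₀ x : ℝ} (hx : x₀ ≠ x)
    (hf : ContDiffOn ℝ 1 f (uIcc x₀ x)) (hfx₀ : DifferentiableAt ℝ f x₀)
    (hf' : DifferentiableOn ℝ (deriv f) (uIoo x₀ x)) :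
    ∃ t ∈ uIoo x₀ x,
      f x - (f x₀ + deriv f x₀ * (x - x₀)) = deriv (deriv f) t * (x - x₀) ^ 2 / 2 := by
  have hnhds : ∀ t ∈ uIoo x₀ x, uIcc x₀ x ∈ nhds t := fun t ht => Icc_mem_nhds ht.1 ht.2
  have hderivWithin : EqOn (derivWithin f (uIcc x₀ x)) (deriv f) (uIoo x₀ x) :=
    fun t ht => derivWithin_of_mem_nhds (hnhds t ht)
  have hderivWithin₀ : derivWithin f (uIcc x₀ x) x₀ = deriv f x₀ :=
    hfx₀.derivWithin (uniqueDiffOn_uIcc hx x₀ left_mem_uIcc)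
  obtain ⟨t, ht, hremainder⟩ := taylor_mean_remainder_lagrange (n := 1) hx hf
    (by simpa only [iteratedDerivWithin_one] using hf'.congr hderivWithin)
  have hsecond : iteratedDerivWithin 2 f (uIcc x₀ x) t = deriv (deriv f) t := by
    rw [iteratedDerivWithin_succ, iteratedDerivWithin_one, derivWithin_of_mem_nhds (hnhds t ht)]
    exact (hderivWithin.eventuallyEq_of_mem (isOpen_Ioo.mem_nhds ht)).deriv_eq
  refine ⟨t, ht, ?_⟩
  simpa [taylorWithinEval_succ, hderivWithin₀, hsecond, mul_comm] using hremainder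

theorem abs_eq_sqrt_div_of_eq_mul_sq {c k d : ℝ} (hk : k ≠ 0) (h : c = k * d ^ 2) :
    |d| = √(c / k) := by
  rw [h, mul_div_cancel_left₀ _ hk, Real.sqrt_sq_eq_abs]

theorem stmt_4_general {A : ℝ → ℝ} {θ₀ θStar c n : ℝ} (hne : θ₀ ≠ θStar)
    (hA : ContDiffOn ℝ 1 A (uIcc θ₀ θStar)) (hAStar : DifferentiableAt ℝ A θStar)
    (hA' : DifferentiableOn ℝ (deriv A) (uIoo θ₀ θStar)) (hn : n ≠ 0)
    (hstat : deriv (fun θ => (c + n * (A θ - A θ₀)) / (θ - θ₀)) θStar = 0) :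
    ∃ t ∈ uIoo θ₀ θStar,
      c = n / 2 * deriv (deriv A) t * (θStar - θ₀) ^ 2 ∧
      (0 < deriv (deriv A) t → |θStar - θ₀| = √(2 * c / (n * deriv (deriv A) t))) := by
  have hnum : HasDerivAt (fun θ => c + n * (A θ - A θ₀)) (n * deriv A θStar) θStar :=
    ((hAStar.hasDerivAt.sub_const (A θ₀)).const_mul n).const_add c
  have hbalance : c + n * (A θStar - A θ₀) = n * deriv A θStar * (θStar - θ₀) := by
    rwa [deriv_div_sub_eq_zero_iff hnum.differentiableAt hne.symm, hnum.deriv] at hstat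
  rw [uIcc_comm] at hA
  rw [uIoo_comm] at hA' ⊢
  obtain ⟨t, ht, htaylor⟩ := taylor_mean_remainder_lagrange_deriv_deriv hne.symm hA hAStar hA'
  have hc : c = n / 2 * deriv (deriv A) t * (θStar - θ₀) ^ 2 := by
    linear_combination hbalance + n * htaylor
  refine ⟨t, ht, hc, fun hpos => abs_eq_sqrt_div_of_eq_mul_sq (mul_ne_zero hn hpos.ne') ?_⟩
  linear_combination 2 * hc

/-- Lemma 2, statement 1: let
`g_γ(θ,θ₀) = (log γ + n[A(θ) − A(θ₀)])/(θ − θ₀)` with `γ > 1`, `n ≥ 1`, and `A`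
twice continuously differentiable on an (open) interval containing `[θ₀, θ*]`.
If `θ* > θ₀` is a stationary point of `g_γ(·,θ₀)`, then there exists
`t ∈ (θ₀, θ*)` with `log γ = (n/2) A''(t) (θ* − θ₀)²`; in particular, if
`A''(t) > 0` then `|θ* − θ₀| = √(2 log γ / (n A''(t)))`. -/
theorem stmt_4 (A : ℝ → ℝ) (θ₀ θStar : ℝ) (hlt : θ₀ < θStar)
    (s : Set ℝ) (hs : IsOpen s) (hsub : Set.Icc θ₀ θStar ⊆ s)
    (hA : ContDiffOn ℝ 2 A s)
    (γ : ℝ) (hγ : 1 < γ) (n : ℕ) (hn : 1 ≤ n)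
    (hstat :
      deriv (fun θ => (Real.log γ + n * (A θ - A θ₀)) / (θ - θ₀)) θStar = 0) :
    ∃ t ∈ Set.Ioo θ₀ θStar,
      Real.log γ = (n / 2 : ℝ) * deriv (deriv A) t * (θStar - θ₀) ^ 2 ∧
      (0 < deriv (deriv A) t →
        |θStar - θ₀| = Real.sqrt (2 * Real.log γ / (n * deriv (deriv A) t))) := by
  have hAStar : ContDiffAt ℝ 2 A θStar := hA.contDiffAt (hs.mem_nhds (hsub ⟨hlt.le, le_rfl⟩))
  have hA' : DifferentiableOn ℝ (deriv A) s :=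
    (hA.deriv_of_isOpen hs one_add_one_eq_two.le).differentiableOn one_ne_zero
  rw [← uIcc_of_lt hlt] at hsub
  rw [← uIoo_of_lt hlt]
  exact stmt_4_general hlt.ne ((hA.of_le one_le_two).mono hsub)
    (hAStar.differentiableAt two_ne_zero) (hA'.mono (uIoo_subset_uIcc_self.trans hsub))
    (Nat.cast_ne_zero.mpr (Nat.one_le_iff_ne_zero.mp hn)) hstat
end

section
/- Fix μ₀ ∈ ℝ, σ > 0, n ≥ 1, z_α > 0, and γ > 1, and set μ₁ = μ₀ + σ√(2 log γ / n). Then the rejection region of the classical one-sided test, {x̄ : x̄ > μ₀ + z_α σ/√n}, coincides with the rejection region of the UMPBT(γ), {x̄ : x̄ > σ² log(γ)/(n(μ₁ − μ₀)) + (μ₀ + μ₁)/2}, if and only if γ = exp(z_α²/2). Equivalently, the evidence threshold corresponding to a classical one-sided normal test with critical value z_α is γ = exp(z_α²/2). -/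
/-!
For a simple alternative `μ₁ = μ₀ + δ`, the Bayes factor threshold exceeds `μ₀` by
`σ² log γ / (n δ) + δ / 2`, and the UMPBT(γ) alternative is the `δ` minimising this sum. At the
minimum the two terms are equal (equality in AM-GM), so the threshold is `μ₀ + δ = μ₁` itself.
Measured from `μ₀` in units of the standard error `σ / √n`, the UMPBT(γ) threshold is therefore
`√(2 log γ)` and the classical one is `z_α`.
-/

theorem div_mul_sub_add_midpoint_eq_right {K : Type*} [Field K] [NeZero (2 : K)] {a b c n : K}
    (hn : n ≠ 0) (h : n * (b - a) ^ 2 = 2 * c) :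
    c / (n * (b - a)) + (a + b) / 2 = b := by
  have two_ne : (2 : K) ≠ 0 := two_ne_zero
  have hc : c = n * (b - a) ^ 2 / 2 := by rw [h, mul_div_cancel_left₀ c two_ne]
  have terms_eq : c / (n * (b - a)) = (b - a) / 2 := by
    rcases eq_or_ne (b - a) 0 with hab | hab
    · simp [hab]
    · rw [hc]
      field_simp
  rw [terms_eq]
  field_simp
  ring

theorem umpbt_threshold_eq_alternative {μ₀ μ₁ σ n γ : ℝ} (hn : 0 < n) (hγ : 1 ≤ γ)
    (hμ₁ : μ₁ = μ₀ + σ * √(2 * Real.log γ / n)) :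
    σ ^ 2 * Real.log γ / (n * (μ₁ - μ₀)) + (μ₀ + μ₁) / 2 = μ₁ := by
  have hlog : 0 ≤ Real.log γ := Real.log_nonneg hγ
  refine div_mul_sub_add_midpoint_eq_right hn.ne' ?_
  rw [hμ₁, add_sub_cancel_left, mul_pow, Real.sq_sqrt (by positivity)]
  field_simp

theorem mul_div_sqrt_eq_mul_sqrt_div_iff {z σ a n : ℝ} (hσ : σ ≠ 0) (hn : 0 < n) :
    z * σ / √n = σ * √(a / n) ↔ z = √a := by
  rw [Real.sqrt_div' a hn.le, mul_comm z, ← mul_div_assoc,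
    div_left_inj' (Real.sqrt_pos.2 hn).ne', mul_right_inj' hσ]

theorem eq_sqrt_two_mul_log_iff_eq_exp {z γ : ℝ} (hz : 0 ≤ z) (hγ : 1 ≤ γ) :
    z = √(2 * Real.log γ) ↔ γ = Real.exp (z ^ 2 / 2) := by
  have hlog : 0 ≤ Real.log γ := Real.log_nonneg hγ
  calc
    z = √(2 * Real.log γ) ↔ z ^ 2 = 2 * Real.log γ := by
      rw [eq_comm, Real.sqrt_eq_iff_eq_sq (by positivity) hz, eq_comm]
    _ ↔ Real.log γ = z ^ 2 / 2 := by
      rw [eq_div_iff two_ne_zero, mul_comm, eq_comm]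
    _ ↔ γ = Real.exp (z ^ 2 / 2) := by
      rw [← Real.exp_eq_exp, Real.exp_log (zero_lt_one.trans_le hγ)]

/-- for `μ₀ ∈ ℝ`, `σ > 0`, `n ≥ 1`, `z_α > 0`, `γ > 1` and
`μ₁ = μ₀ + σ√(2 log γ / n)`, the classical one-sided rejection region
`{x̄ : x̄ > μ₀ + z_α σ/√n}` coincides with the UMPBT(γ) rejection region
`{x̄ : x̄ > σ² log(γ)/(n(μ₁ − μ₀)) + (μ₀ + μ₁)/2}` if and only if
`γ = exp(z_α²/2)`. -/
theorem stmt_11 (μ₀ σ : ℝ) (hσ : 0 < σ) (n : ℕ) (hn : 1 ≤ n)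
    (zα : ℝ) (hz : 0 < zα) (γ : ℝ) (hγ : 1 < γ)
    (μ₁ : ℝ) (hμ₁ : μ₁ = μ₀ + σ * Real.sqrt (2 * Real.log γ / n)) :
    {xbar : ℝ | xbar > μ₀ + zα * σ / Real.sqrt n} =
        {xbar : ℝ | xbar >
          σ ^ 2 * Real.log γ / (n * (μ₁ - μ₀)) + (μ₀ + μ₁) / 2} ↔
      γ = Real.exp (zα ^ 2 / 2) := by
  have hn' : (0 : ℝ) < n := by exact_mod_cast hn
  rw [umpbt_threshold_eq_alternative hn' hγ.le hμ₁]
  calc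
    {xbar : ℝ | xbar > μ₀ + zα * σ / √n} = {xbar : ℝ | xbar > μ₁}
        ↔ μ₀ + zα * σ / √n = μ₁ := Set.Ioi_inj
    _ ↔ zα * σ / √n = σ * √(2 * Real.log γ / n) := by rw [hμ₁, add_right_inj]
    _ ↔ zα = √(2 * Real.log γ) := mul_div_sqrt_eq_mul_sqrt_div_iff hσ.ne' hn'
    _ ↔ γ = Real.exp (zα ^ 2 / 2) := eq_sqrt_two_mul_log_iff_eq_exp hz.le hγ.le
end

section
/- Let x ∈ {0,1,…,n} and let 0 < p₀ < p₁ < 1. The binomial Bayes factor BF₁₀(x) = [p₁^x (1−p₁)^{n−x}] / [p₀^x (1−p₀)^{n−x}] between the point hypotheses p = p₁ and p = p₀ satisfies, for any γ > 0: BF₁₀(x) > γ if and only if x > [log γ − n log((1−p₁)/(1−p₀))] / log[ p₁(1−p₀) / ((1−p₁)p₀) ]. Consequently, the UMPBT(γ) for the one-sided test p > p₀ is obtained by choosing p₁ to minimize this threshold over p ∈ (p₀, 1). -/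
/-!
Writing `a = p / p₀` and `b = (1 - p) / (1 - p₀)`, the Bayes factor of `k` successes in `n` trials
is `a ^ k * b ^ (n - k)`, whose logarithm `n * log b + k * log (a / b)` is affine in `k`, with
positive slope when `p₀ < p`. The event that the Bayes factor exceeds `γ` is thus an upper tail of
the count. Upper tails are nested, so the one with the least threshold contains all the others and
has the largest probability under every success probability.
-/

open Set

/-- The Bayes factor of the point hypothesis `p` against the point hypothesis `p₀` when `k`
successes are observed in `n` trials. The binomial coefficients of the two likelihoods cancel and
are omitted. -/
noncomputable def binomialBayesFactor (n : ℕ) (p₀ p : ℝ) (k : ℕ) : ℝ :=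
  p ^ k * (1 - p) ^ (n - k) / (p₀ ^ k * (1 - p₀) ^ (n - k))

/-- The critical value of the Bayes factor test: for `p₀ < p`, the Bayes factor of `p` against `p₀`
exceeds `γ` exactly when the number of successes exceeds this real number. -/
noncomputable def bayesFactorThreshold (n : ℕ) (γ p₀ p : ℝ) : ℝ :=
  (Real.log γ - n * Real.log ((1 - p) / (1 - p₀))) / Real.log (p * (1 - p₀) / ((1 - p) * p₀))

/-- The probability that the number of successes in `n` independent trials of success probability
`q` satisfies `P`, as an explicit finite sum of binomial weights. -/
noncomputable def binomialProb (n : ℕ) (q : ℝ) (P : ℕ → Prop) [DecidablePred P] : ℝ :=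
  ∑ k ∈ Finset.range (n + 1), if P k then (n.choose k : ℝ) * q ^ k * (1 - q) ^ (n - k) else 0

/-- `pstar` is the alternative of a uniformly most powerful Bayesian test with evidence threshold
`γ` against `p₀`, among the alternatives in `S`: under every data-generating success probability
`q`, it maximizes the probability that the Bayes factor against `p₀` exceeds `γ`. -/
def IsUMPBT (n : ℕ) (γ p₀ : ℝ) (S : Set ℝ) (pstar : ℝ) : Prop :=
  pstar ∈ S ∧ ∀ q ∈ Icc (0 : ℝ) 1,
    IsMaxOn (fun p ↦ binomialProb n q fun k ↦ binomialBayesFactor n p₀ p k > γ) S pstar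

theorem lt_pow_mul_pow_sub_iff {a b γ : ℝ} (hb : 0 < b) (hba : b < a) (hγ : 0 < γ)
    {n k : ℕ} (hk : k ≤ n) :
    γ < a ^ k * b ^ (n - k) ↔ (Real.log γ - n * Real.log b) / Real.log (a / b) < k := by
  have ha : 0 < a := hb.trans hba
  have slope_pos : 0 < Real.log (a / b) := Real.log_pos ((one_lt_div hb).2 hba)
  have log_affine : Real.log (a ^ k * b ^ (n - k)) = n * Real.log b + k * Real.log (a / b) := by
    rw [Real.log_mul (by positivity) (by positivity), Real.log_pow, Real.log_pow,
      Real.log_div ha.ne' hb.ne', Nat.cast_sub hk]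
    ring
  rw [← Real.log_lt_log_iff hγ (by positivity), log_affine, div_lt_iff₀ slope_pos,
    sub_lt_iff_lt_add']

theorem binomialBayesFactor_eq_pow_mul_pow (n : ℕ) (p₀ p : ℝ) (k : ℕ) :
    binomialBayesFactor n p₀ p k = (p / p₀) ^ k * ((1 - p) / (1 - p₀)) ^ (n - k) := by
  rw [binomialBayesFactor, div_pow, div_pow, div_mul_div_comm]

theorem binomialBayesFactor_gt_iff {n k : ℕ} (hk : k ≤ n) {γ p₀ p : ℝ} (hγ : 0 < γ)
    (hp₀ : 0 < p₀) (hp : p ∈ Ioo p₀ 1) :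
    binomialBayesFactor n p₀ p k > γ ↔ (k : ℝ) > bayesFactorThreshold n γ p₀ p := by
  obtain ⟨hp₀p, hp1⟩ := hp
  have hp₀1 : p₀ < 1 := hp₀p.trans hp1
  have failure_ratio_pos : 0 < (1 - p) / (1 - p₀) := div_pos (sub_pos.2 hp1) (sub_pos.2 hp₀1)
  have failure_ratio_lt_success_ratio : (1 - p) / (1 - p₀) < p / p₀ :=
    calc (1 - p) / (1 - p₀) < 1 := (div_lt_one (sub_pos.2 hp₀1)).2 (sub_lt_sub_left hp₀p 1)
      _ < p / p₀ := (one_lt_div hp₀).2 hp₀p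
  have odds_ratio : p * (1 - p₀) / ((1 - p) * p₀) = p / p₀ / ((1 - p) / (1 - p₀)) := by
    rw [div_div_div_eq, mul_comm p₀]
  rw [binomialBayesFactor_eq_pow_mul_pow, bayesFactorThreshold, odds_ratio]
  exact lt_pow_mul_pow_sub_iff failure_ratio_pos failure_ratio_lt_success_ratio hγ hk

theorem binomialProb_mono {n : ℕ} {q : ℝ} (hq : q ∈ Icc (0 : ℝ) 1) {P Q : ℕ → Prop}
    [DecidablePred P] [DecidablePred Q] (hPQ : ∀ k ≤ n, P k → Q k) :
    binomialProb n q P ≤ binomialProb n q Q := by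
  have weight_nonneg (k : ℕ) : 0 ≤ (n.choose k : ℝ) * q ^ k * (1 - q) ^ (n - k) :=
    mul_nonneg (mul_nonneg (Nat.cast_nonneg _) (pow_nonneg hq.1 k))
      (pow_nonneg (sub_nonneg.2 hq.2) _)
  simp only [binomialProb, ← Finset.sum_filter]
  refine Finset.sum_le_sum_of_subset_of_nonneg (fun k hk ↦ ?_) fun k _ _ ↦ weight_nonneg k
  obtain ⟨hkn, hPk⟩ := Finset.mem_filter.1 hk
  exact Finset.mem_filter.2 ⟨hkn, hPQ k (Finset.mem_range_succ_iff.1 hkn) hPk⟩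

theorem isUMPBT_of_isMinOn_bayesFactorThreshold {n : ℕ} {γ p₀ pstar : ℝ} {S : Set ℝ} (hγ : 0 < γ)
    (hp₀ : 0 < p₀) (hS : S ⊆ Ioo p₀ 1) (hpstar : pstar ∈ S)
    (hmin : IsMinOn (bayesFactorThreshold n γ p₀) S pstar) : IsUMPBT n γ p₀ S pstar := by
  refine ⟨hpstar, fun q hq p hp ↦ binomialProb_mono hq fun k hk hpk ↦ ?_⟩
  rw [binomialBayesFactor_gt_iff hk hγ hp₀ (hS hpstar)]
  calc bayesFactorThreshold n γ p₀ pstar ≤ bayesFactorThreshold n γ p₀ p := hmin hp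
    _ < k := (binomialBayesFactor_gt_iff hk hγ hp₀ (hS hp)).1 hpk

/-- for `x ∈ {0,…,n}` and `0 < p₀ < p₁ < 1`, the binomial Bayes
factor `BF₁₀(x) = p₁^x(1−p₁)^{n−x} / (p₀^x(1−p₀)^{n−x})` exceeds `γ > 0` iff
`x > [log γ − n log((1−p₁)/(1−p₀))] / log[p₁(1−p₀)/((1−p₁)p₀)]`.
Consequently, the UMPBT(γ) for the one-sided test `p > p₀` is obtained by
choosing `p₁` minimizing this threshold over `(p₀, 1)`: any such minimizer
`p*` maximizes, for every data-generating success probability `p_t`, the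
binomial probability that the Bayes factor exceeds `γ`. -/
theorem stmt_12 (n x : ℕ) (hx : x ≤ n) (p₀ p₁ : ℝ)
    (h0 : 0 < p₀) (h01 : p₀ < p₁) (h1 : p₁ < 1) (γ : ℝ) (hγ : 0 < γ) :
    (p₁ ^ x * (1 - p₁) ^ (n - x) / (p₀ ^ x * (1 - p₀) ^ (n - x)) > γ ↔
      (x : ℝ) > (Real.log γ - n * Real.log ((1 - p₁) / (1 - p₀))) /
        Real.log (p₁ * (1 - p₀) / ((1 - p₁) * p₀))) ∧
    (∀ pstar ∈ Set.Ioo p₀ 1,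
      (∀ p ∈ Set.Ioo p₀ 1,
        (Real.log γ - n * Real.log ((1 - pstar) / (1 - p₀))) /
            Real.log (pstar * (1 - p₀) / ((1 - pstar) * p₀)) ≤
          (Real.log γ - n * Real.log ((1 - p) / (1 - p₀))) /
            Real.log (p * (1 - p₀) / ((1 - p) * p₀))) →
      ∀ pt ∈ Set.Icc (0 : ℝ) 1, ∀ p ∈ Set.Ioo p₀ 1,
        (∑ k ∈ Finset.range (n + 1),
          if p ^ k * (1 - p) ^ (n - k) / (p₀ ^ k * (1 - p₀) ^ (n - k)) > γ
            then (n.choose k : ℝ) * pt ^ k * (1 - pt) ^ (n - k) else 0) ≤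
        ∑ k ∈ Finset.range (n + 1),
          if pstar ^ k * (1 - pstar) ^ (n - k) /
              (p₀ ^ k * (1 - p₀) ^ (n - k)) > γ
            then (n.choose k : ℝ) * pt ^ k * (1 - pt) ^ (n - k) else 0) := by
  refine ⟨binomialBayesFactor_gt_iff hx hγ h0 ⟨h01, h1⟩, fun pstar hpstar hmin pt hpt p hp ↦ ?_⟩
  have umpbt : IsUMPBT n γ p₀ (Ioo p₀ 1) pstar :=
    isUMPBT_of_isMinOn_bayesFactorThreshold hγ h0 Subset.rfl hpstar hmin
  exact umpbt.2 pt hpt hp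
end

section
/- Let X be an n×p real matrix of full column rank with p-th column x_p, let X₋ₚ consist of the first p−1 columns of X, let S be a symmetric positive definite (p−1)×(p−1) matrix, and set F = X₋ₚᵀX₋ₚ + S⁻¹ and H = X₋ₚ F⁻¹ X₋ₚᵀ. Suppose c := x_pᵀ(Iₙ − H)x_p > 0, and fix σ² > 0 and γ > 1. Then the threshold function t(β) = σ² log(γ)/β + (β/2)c, defined for β > 0, attains its unique minimum at β* = √(2σ² log γ / c), with minimum value t(β*) = √(2σ² c log γ). Consequently, for any random vector y in ℝⁿ and any β > 0, P[ x_pᵀ(Iₙ − H)y > t(β) ] ≤ P[ x_pᵀ(Iₙ − H)y > t(β*) ]; i.e., the point alternative β_p = β* maximizes the probability that the Bayes factor for the regression coefficient test exceeds γ, uniformly over the distribution generating y. -/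
open MeasureTheory Matrix

/-- The threshold `t(β) = a / β + (β / 2) c` which the test statistic has to exceed for the Bayes
factor of the point alternative `β` to exceed `γ`; here `a` stands for `σ² log γ` and `c` for
`x_pᵀ(Iₙ − H)x_p`. It is meaningful for `β ≠ 0` only: at `β = 0` its value is the junk value `0`. -/
noncomputable def bayesThreshold (a c β : ℝ) : ℝ := a / β + β / 2 * c

/-- The point alternative `β* = √(2a / c)` of the uniformly most powerful Bayesian test, with `a`
and `c` as in `bayesThreshold`. -/
noncomputable def umpbtAlternative (a c : ℝ) : ℝ := √(2 * a / c)

section Threshold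

variable {a c β : ℝ}

theorem umpbtAlternative_pos (ha : 0 < a) (hc : 0 < c) : 0 < umpbtAlternative a c :=
  Real.sqrt_pos.mpr (by positivity)

theorem umpbtAlternative_sq_mul (ha : 0 ≤ a) (hc : 0 < c) :
    umpbtAlternative a c ^ 2 * c = 2 * a := by
  rw [umpbtAlternative, Real.sq_sqrt (by positivity), div_mul_cancel₀ _ hc.ne']

theorem umpbtAlternative_mul (ha : 0 ≤ a) (hc : 0 < c) :
    umpbtAlternative a c * c = √(2 * a * c) := by
  have hnonneg : 0 ≤ umpbtAlternative a c * c := mul_nonneg (Real.sqrt_nonneg _) hc.le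
  rw [← Real.sqrt_sq hnonneg]
  congr 1
  linear_combination c * umpbtAlternative_sq_mul ha hc

theorem bayesThreshold_eq_sqrt_add_sq (ha : 0 ≤ a) (hc : 0 < c) (hβ : β ≠ 0) :
    bayesThreshold a c β = √(2 * a * c) + c / (2 * β) * (β - umpbtAlternative a c) ^ 2 := by
  have hsq := umpbtAlternative_sq_mul ha hc
  rw [← umpbtAlternative_mul ha hc, bayesThreshold]
  field_simp
  linear_combination -hsq

theorem bayesThreshold_umpbtAlternative (ha : 0 < a) (hc : 0 < c) :
    bayesThreshold a c (umpbtAlternative a c) = √(2 * a * c) := by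
  simp [bayesThreshold_eq_sqrt_add_sq ha.le hc (umpbtAlternative_pos ha hc).ne']

theorem bayesThreshold_umpbtAlternative_lt (ha : 0 < a) (hc : 0 < c) (hβ : 0 < β)
    (hne : β ≠ umpbtAlternative a c) :
    bayesThreshold a c (umpbtAlternative a c) < bayesThreshold a c β := by
  have hdist : 0 < (β - umpbtAlternative a c) ^ 2 := sq_pos_of_ne_zero (sub_ne_zero.mpr hne)
  rw [bayesThreshold_umpbtAlternative ha hc, bayesThreshold_eq_sqrt_add_sq ha.le hc hβ.ne']
  exact lt_add_of_pos_right _ (mul_pos (by positivity) hdist)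

theorem bayesThreshold_umpbtAlternative_le (ha : 0 < a) (hc : 0 < c) (hβ : 0 < β) :
    bayesThreshold a c (umpbtAlternative a c) ≤ bayesThreshold a c β := by
  rcases eq_or_ne β (umpbtAlternative a c) with rfl | hne
  · rfl
  · exact (bayesThreshold_umpbtAlternative_lt ha hc hβ hne).le

theorem measure_bayesThreshold_lt_le {Ω : Type*} [MeasurableSpace Ω] (P : Measure Ω) (T : Ω → ℝ)
    (ha : 0 < a) (hc : 0 < c) (hβ : 0 < β) :
    P {ω | bayesThreshold a c β < T ω} ≤
      P {ω | bayesThreshold a c (umpbtAlternative a c) < T ω} :=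
  measure_mono fun _ hω => (bayesThreshold_umpbtAlternative_le ha hc hβ).trans_lt hω

end Threshold

theorem stmt_18_general {Ω : Type*} [MeasurableSpace Ω] (T : Ω → ℝ) {a c : ℝ}
    (ha : 0 < a) (hc : 0 < c) :
    (∀ β, 0 < β → bayesThreshold a c (umpbtAlternative a c) ≤ bayesThreshold a c β ∧
      (bayesThreshold a c β = bayesThreshold a c (umpbtAlternative a c) →
        β = umpbtAlternative a c)) ∧
    bayesThreshold a c (umpbtAlternative a c) = √(2 * a * c) ∧
    (∀ (P : Measure Ω) (β : ℝ), 0 < β →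
      P {ω | bayesThreshold a c β < T ω} ≤
        P {ω | bayesThreshold a c (umpbtAlternative a c) < T ω}) := by
  refine ⟨fun β hβ => ⟨bayesThreshold_umpbtAlternative_le ha hc hβ, fun heq => ?_⟩,
    bayesThreshold_umpbtAlternative ha hc,
    fun P β hβ => measure_bayesThreshold_lt_le P T ha hc hβ⟩
  by_contra hne
  exact (bayesThreshold_umpbtAlternative_lt ha hc hβ hne).ne' heq

/-- let `X` be an `n×p` real matrix of full column rank
(`p = m+1`) with last column `x_p`, let `X₋ₚ` be its first `p−1` columns, let
`S` be symmetric positive definite, `F = X₋ₚᵀX₋ₚ + S⁻¹`, `H = X₋ₚF⁻¹X₋ₚᵀ`, and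
suppose `c = x_pᵀ(Iₙ − H)x_p > 0`.  For `σ² = v > 0` and `γ > 1`, the threshold
`t(β) = σ² log(γ)/β + (β/2)c` on `β > 0` attains its unique minimum at
`β* = √(2σ² log γ / c)`, with value `t(β*) = √(2σ² c log γ)`.  Consequently,
for any random vector `y` in `ℝⁿ` (any law `P`) and any `β > 0`,
`P[x_pᵀ(Iₙ − H)y > t(β)] ≤ P[x_pᵀ(Iₙ − H)y > t(β*)]`. -/
theorem stmt_18 (n m : ℕ) (Xm : Matrix (Fin n) (Fin (m + 1)) ℝ)
    (hrank : Xm.rank = m + 1)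
    (S : Matrix (Fin m) (Fin m) ℝ) (hS : S.PosDef)
    (Xp : Matrix (Fin n) (Fin m) ℝ) (hXp : Xp = Xm.submatrix id Fin.castSucc)
    (xp : Fin n → ℝ) (hxp : xp = fun i => Xm i (Fin.last m))
    (F : Matrix (Fin m) (Fin m) ℝ) (hF : F = Xpᵀ * Xp + S⁻¹)
    (H : Matrix (Fin n) (Fin n) ℝ) (hH : H = Xp * F⁻¹ * Xpᵀ)
    (c : ℝ) (hc : c = xp ⬝ᵥ (1 - H).mulVec xp) (hcpos : 0 < c)
    (v γ : ℝ) (hv : 0 < v) (hγ : 1 < γ)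
    (t : ℝ → ℝ) (ht : ∀ β, t β = v * Real.log γ / β + β / 2 * c)
    (βstar : ℝ) (hβ : βstar = Real.sqrt (2 * v * Real.log γ / c)) :
    (∀ β, 0 < β → t βstar ≤ t β ∧ (t β = t βstar → β = βstar)) ∧
    t βstar = Real.sqrt (2 * v * c * Real.log γ) ∧
    (∀ (P : Measure (Fin n → ℝ)) (β : ℝ), 0 < β →
      P {y | t β < xp ⬝ᵥ (1 - H).mulVec y} ≤
        P {y | t βstar < xp ⬝ᵥ (1 - H).mulVec y}) := by
  obtain rfl : t = bayesThreshold (v * Real.log γ) c := funext ht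
  obtain rfl : βstar = umpbtAlternative (v * Real.log γ) c := by
    rw [hβ, umpbtAlternative, mul_assoc]
  rw [mul_right_comm (2 * v), mul_assoc 2 v]
  exact stmt_18_general (fun y => xp ⬝ᵥ (1 - H).mulVec y) (mul_pos hv (Real.log_pos hγ)) hcpos
end
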